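/- Let ρ > 0 and σ > 0, and define m(λ) = ρσ · ∫_0^∞ ln(1 + sinh²(λ/(2ρ))·erfc(η)·erfc(−η)) dη. Then lim_{λ→0} ( m(λ) − σλ²/(2ρ√(2π)) ) / λ⁴ = (σ/(48ρ³)) · ∫_0^∞ (1 − (3/2)·erfc(η)·erfc(−η)) · erfc(η)·erfc(−η) dη. Equivalently, the fourth cumulant of the tracer position in the quenched setting is ⟨x(t)⁴⟩_c = (σ√t/(2ρ³)) · ∫_0^∞ (1 − (3/2)·erfc(η)·erfc(−η))·erfc(η)·erfc(−η) dη. -/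

import Mathlib

open MeasureTheory Real Filter Topology

/-- The complementary error function `erfc(x) = (2/√π) ∫_x^∞ e^{−u²} du`. -/
noncomputable def erfc (x : ℝ) : ℝ := (2 / Real.sqrt π) * ∫ u in Set.Ioi x, Real.exp (-u ^ 2)

/-- The quenched cumulant generating function per unit `√t`:
`m(λ) = ρσ ∫_0^∞ ln(1 + sinh²(λ/(2ρ))·erfc(η)·erfc(−η)) dη`. -/
noncomputable def mq (ρ σ l : ℝ) : ℝ :=
  ρ * σ * ∫ η in Set.Ioi (0 : ℝ),
    Real.log (1 + Real.sinh (l / (2 * ρ)) ^ 2 * erfc η * erfc (-η))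

lemma gi : Integrable (fun u : ℝ => Real.exp (-u ^ 2)) := by
  simpa using integrable_exp_neg_mul_sq (b := 1) one_pos

lemma gtot : ∫ u : ℝ, Real.exp (-u ^ 2) = √π := by
  simpa using integral_gaussian 1

lemma erfc_nonneg (x : ℝ) : 0 ≤ erfc x := by
  unfold erfc
  have : 0 ≤ ∫ u in Set.Ioi x, Real.exp (-u ^ 2) := integral_nonneg fun u => (exp_pos _).le
  positivity

lemma erfc_neg (x : ℝ) : erfc (-x) = 2 - erfc x := by
  have h1 : ∫ u in Set.Ioi (-x), Real.exp (-u ^ 2) = ∫ u in Set.Iic x, Real.exp (-u ^ 2) := by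
    have := integral_comp_neg_Iic x (fun u : ℝ => Real.exp (-u ^ 2))
    simpa using this.symm
  have h2 : (∫ u in Set.Iic x, Real.exp (-u ^ 2)) + ∫ u in Set.Ioi x, Real.exp (-u ^ 2) = √π := by
    rw [← gtot]
    exact intervalIntegral.integral_Iic_add_Ioi gi.integrableOn gi.integrableOn
  have h3 : √π ≠ 0 := by positivity
  unfold erfc
  rw [h1, eq_sub_of_add_eq h2]
  field_simp

lemma erfc_zero : erfc 0 = 1 := by
  have := erfc_neg 0
  rw [neg_zero] at this
  linarith

lemma erfc_eq (x : ℝ) :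
    erfc x = 1 - (2 / √π) * ∫ u in (0:ℝ)..x, Real.exp (-u ^ 2) := by
  have h := intervalIntegral.integral_Ioi_sub_Ioi' (f := fun u : ℝ => Real.exp (-u ^ 2)) (μ := volume)
    (a := 0) (b := x) gi.integrableOn gi.integrableOn
  rw [← h, ← erfc_zero]
  unfold erfc
  ring

lemma erfc_deriv (x : ℝ) : HasDerivAt erfc (-((2 / √π) * Real.exp (-x ^ 2))) x := by
  have hc : Continuous (fun u : ℝ => Real.exp (-u ^ 2)) := by fun_prop
  have h : HasDerivAt (fun x => ∫ u in (0:ℝ)..x, Real.exp (-u ^ 2)) (Real.exp (-x ^ 2)) x :=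
    intervalIntegral.integral_hasDerivAt_right (hc.intervalIntegrable _ _)
      hc.stronglyMeasurable.stronglyMeasurableAtFilter hc.continuousAt
  have h2 := (h.const_mul (2 / √π)).const_sub 1
  exact h2.congr_of_eventuallyEq (Eventually.of_forall erfc_eq)

lemma exp_tend : Tendsto (fun x : ℝ => Real.exp (-x ^ 2)) atTop (𝓝 0) := by
  refine tendsto_exp_neg_atTop_nhds_zero.comp (tendsto_pow_atTop (n := 2) (by norm_num))

lemma exp_der (x : ℝ) :
    HasDerivAt (fun u : ℝ => Real.exp (-u ^ 2)) (Real.exp (-x ^ 2) * (-(2 * x))) x := by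
  have h : HasDerivAt (fun u : ℝ => -u ^ 2) (-(2 * x)) x := by
    have := (hasDerivAt_pow 2 x).fun_neg
    simpa using this
  exact h.exp

lemma mul_erfc_le (x : ℝ) (hx : 0 ≤ x) : x * erfc x ≤ (1 / √π) * Real.exp (-x ^ 2) := by
  have hd : ∀ u ∈ Set.Ici x, HasDerivAt (fun u : ℝ => -(1 / 2) * Real.exp (-u ^ 2))
      (u * Real.exp (-u ^ 2)) u := by
    intro u _
    have h := (exp_der u).const_mul (-(1 / 2 : ℝ))
    have e : u * Real.exp (-u ^ 2) = -(1 / 2) * (Real.exp (-u ^ 2) * (-(2 * u))) := by ring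
    rw [e]
    exact h
  have ht : Tendsto (fun u : ℝ => -(1 / 2) * Real.exp (-u ^ 2)) atTop (𝓝 0) := by
    simpa using exp_tend.const_mul (-(1 / 2 : ℝ))
  have hp : ∀ u ∈ Set.Ioi x, 0 ≤ u * Real.exp (-u ^ 2) := fun u hu =>
    mul_nonneg (hx.trans (le_of_lt hu)) (exp_pos _).le
  have hi := integrableOn_Ioi_deriv_of_nonneg' hd hp ht
  have he := integral_Ioi_of_hasDerivAt_of_nonneg' hd hp ht
  have hle : ∫ u in Set.Ioi x, x * Real.exp (-u ^ 2) ≤ ∫ u in Set.Ioi x, u * Real.exp (-u ^ 2) := by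
    refine setIntegral_mono_on (gi.integrableOn.const_mul x) hi measurableSet_Ioi ?_
    intro u hu
    exact mul_le_mul_of_nonneg_right (le_of_lt hu) (exp_pos _).le
  rw [he, integral_const_mul] at hle
  have : x * erfc x = (2 / √π) * (x * ∫ u in Set.Ioi x, Real.exp (-u ^ 2)) := by
    unfold erfc; ring
  rw [this]
  calc _ ≤ (2 / √π) * (0 - -(1 / 2) * Real.exp (-x ^ 2)) := by gcongr
    _ = _ := by ring

lemma mul_erfc_tend : Tendsto (fun x => x * erfc x) atTop (𝓝 0) := by
  have h : Tendsto (fun x : ℝ => (1 / √π) * Real.exp (-x ^ 2)) atTop (𝓝 0) := by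
    simpa using exp_tend.const_mul (1 / √π)
  refine tendsto_of_tendsto_of_tendsto_of_le_of_le' tendsto_const_nhds h ?_ ?_
  · filter_upwards [eventually_ge_atTop 0] with x hx using mul_nonneg hx (erfc_nonneg x)
  · filter_upwards [eventually_ge_atTop 0] with x hx using mul_erfc_le x hx

lemma erfc_tend : Tendsto erfc atTop (𝓝 0) := by
  refine tendsto_of_tendsto_of_tendsto_of_le_of_le' tendsto_const_nhds mul_erfc_tend ?_ ?_
  · exact Eventually.of_forall erfc_nonneg
  · filter_upwards [eventually_ge_atTop 1] with x hx
    exact le_mul_of_one_le_left (erfc_nonneg x) hx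

/-- The product erfc(x) erfc(-x). -/
noncomputable def pp (x : ℝ) : ℝ := erfc x * erfc (-x)

lemma pp_nonneg (x : ℝ) : 0 ≤ pp x := mul_nonneg (erfc_nonneg _) (erfc_nonneg _)

lemma pp_le (x : ℝ) : pp x ≤ 1 := by
  unfold pp
  rw [erfc_neg]
  nlinarith [sq_nonneg (erfc x - 1)]

lemma erfc_cont : Continuous erfc :=
  continuous_iff_continuousAt.2 fun x => (erfc_deriv x).continuousAt

lemma pp_cont : Continuous pp := by
  have := erfc_cont
  unfold pp
  fun_prop

/-- Antiderivative of `pp`. -/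
noncomputable def HH (x : ℝ) : ℝ :=
  x * (erfc x * (2 - erfc x)) - (2 / √π) * (Real.exp (-x ^ 2) * (1 - erfc x))
    + (√2 / √π) * (1 - erfc (√2 * x))

lemma HH_deriv (x : ℝ) : HasDerivAt HH (pp x) x := by
  have hf := erfc_deriv x
  have hg : HasDerivAt (fun u : ℝ => Real.exp (-u ^ 2)) (Real.exp (-x ^ 2) * (-(2 * x))) x := by
    exact exp_der x
  have hs : HasDerivAt (fun u : ℝ => √2 * u) √2 x := by
    simpa using (hasDerivAt_id x).const_mul √2
  have hf2 := (erfc_deriv (√2 * x)).comp x hs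
  have h := (((hasDerivAt_id x).mul (hf.mul (hf.const_sub 2))).sub
    ((hg.mul (hf.const_sub 1)).const_mul (2 / √π))).add ((hf2.const_sub 1).const_mul (√2 / √π))
  convert! h using 1
  have e : Real.exp (-(√2 * x) ^ 2) = Real.exp (-x ^ 2) * Real.exp (-x ^ 2) := by
    rw [← Real.exp_add, mul_pow, Real.sq_sqrt (by norm_num)]
    congr 1; ring
  have h2 : √2 * √2 = 2 := Real.mul_self_sqrt (by norm_num)
  unfold pp
  simp only [e, erfc_neg, id, Pi.mul_apply]
  linear_combination (-(2 / √π / √π * Real.exp (-x ^ 2) ^ 2)) * h2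

lemma HH_tend : Tendsto HH atTop (𝓝 (√2 / √π)) := by
  have h2 : Tendsto (fun x : ℝ => √2 * x) atTop atTop :=
    tendsto_id.const_mul_atTop (by positivity)
  have h := ((mul_erfc_tend.mul (erfc_tend.const_sub 2)).sub
    ((exp_tend.mul (erfc_tend.const_sub 1)).const_mul (2 / √π))).add
      (((erfc_tend.comp h2).const_sub 1).const_mul (√2 / √π))
  have e : (0 * (2 - 0) - 2 / √π * (0 * (1 - 0)) + √2 / √π * (1 - 0)) = √2 / √π := by ring
  rw [e] at h
  refine h.congr fun x => ?_
  simp only [HH, Function.comp]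
  ring

lemma pp_int : IntegrableOn pp (Set.Ioi 0) :=
  integrableOn_Ioi_deriv_of_nonneg' (fun x _ => HH_deriv x) (fun x _ => pp_nonneg x) HH_tend

lemma pp_integral : ∫ x in Set.Ioi (0:ℝ), pp x = √2 / √π := by
  rw [integral_Ioi_of_hasDerivAt_of_nonneg' (fun x _ => HH_deriv x) (fun x _ => pp_nonneg x) HH_tend]
  simp [HH, erfc_zero]

lemma pp2_int : IntegrableOn (fun x => pp x ^ 2) (Set.Ioi 0) := by
  refine Integrable.mono' pp_int (pp_cont.pow 2).aestronglyMeasurable (Eventually.of_forall fun x => ?_)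
  rw [Real.norm_of_nonneg (by positivity)]
  nlinarith [pp_nonneg x, pp_le x]

lemma log_bound (y : ℝ) (h0 : 0 ≤ y) (h1 : y ≤ 1 / 2) :
    |Real.log (1 + y) - (y - y ^ 2 / 2)| ≤ 2 * y ^ 3 := by
  have h := Real.abs_log_sub_add_sum_range_le (x := -y) (by rw [abs_neg, abs_of_nonneg h0]; linarith) 2
  rw [abs_neg, abs_of_nonneg h0] at h
  have e : (∑ i ∈ Finset.range 2, (-y) ^ (i + 1) / ((i:ℝ) + 1)) + Real.log (1 - -y)
      = Real.log (1 + y) - (y - y ^ 2 / 2) := by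
    simp [Finset.sum_range_succ]
    ring
  rw [e] at h
  refine h.trans ?_
  rw [div_le_iff₀ (by linarith)]
  have : 0 ≤ y ^ 3 := by positivity
  norm_num
  nlinarith

lemma int_bound (t : ℝ) (h0 : 0 ≤ t) (h1 : t ≤ 1 / 2) :
    |(∫ x in Set.Ioi (0:ℝ), Real.log (1 + t * pp x)) -
      (t * (∫ x in Set.Ioi (0:ℝ), pp x) - t ^ 2 / 2 * ∫ x in Set.Ioi (0:ℝ), pp x ^ 2)|
      ≤ 2 * t ^ 3 * ∫ x in Set.Ioi (0:ℝ), pp x := by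
  have hb : ∀ x, |Real.log (1 + t * pp x) - (t * pp x - t ^ 2 / 2 * pp x ^ 2)| ≤ 2 * t ^ 3 * pp x := by
    intro x
    have a := pp_nonneg x
    have b := pp_le x
    have h := log_bound (t * pp x) (by positivity) (by nlinarith)
    have e : t * pp x - t ^ 2 / 2 * pp x ^ 2 = t * pp x - (t * pp x) ^ 2 / 2 := by ring
    rw [e]
    refine h.trans ?_
    have : pp x ^ 3 ≤ pp x := by
      have := pow_le_of_le_one a b (n := 3) (by norm_num)
      exact this
    rw [mul_pow]
    have : t ^ 3 * pp x ^ 3 ≤ t ^ 3 * pp x := by gcongr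
    linarith
  have hI : IntegrableOn (fun x => t * pp x - t ^ 2 / 2 * pp x ^ 2) (Set.Ioi 0) :=
    (pp_int.const_mul t).sub (pp2_int.const_mul _)
  have hB : IntegrableOn (fun x => 2 * t ^ 3 * pp x) (Set.Ioi 0) := pp_int.const_mul _
  have hlc : Continuous (fun x => Real.log (1 + t * pp x)) := by
    refine Continuous.log (by have := pp_cont; fun_prop) fun x => ?_
    have := pp_nonneg x
    positivity
  have hD : IntegrableOn (fun x => Real.log (1 + t * pp x) - (t * pp x - t ^ 2 / 2 * pp x ^ 2))
      (Set.Ioi 0) := by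
    refine Integrable.mono' hB ?_ (Eventually.of_forall hb)
    exact hlc.aestronglyMeasurable.sub hI.aestronglyMeasurable
  have hL : IntegrableOn (fun x => Real.log (1 + t * pp x)) (Set.Ioi 0) := by
    refine (hD.add hI).congr (Eventually.of_forall fun x => ?_)
    simp
  rw [← integral_const_mul, ← integral_const_mul, ← integral_const_mul,
    ← integral_sub (pp_int.const_mul t) (pp2_int.const_mul _), ← integral_sub hL hI]
  exact norm_integral_le_of_norm_le hB (Eventually.of_forall fun x => by
    rw [Real.norm_eq_abs]; exact hb x)

lemma sinh_sq_bound (x : ℝ) (hx : |x| ≤ 1 / 2) :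
    |Real.sinh x ^ 2 - x ^ 2 - x ^ 4 / 3| ≤ 32 * |x| ^ 5 := by
  have h1 := Real.exp_bound (x := 2 * x) (by rw [abs_mul, abs_two]; linarith) (n := 5) (by norm_num)
  have h2 := Real.exp_bound (x := -(2 * x)) (by rw [abs_neg, abs_mul, abs_two]; linarith)
    (n := 5) (by norm_num)
  have e : Real.sinh x ^ 2 = (Real.exp (2 * x) + Real.exp (-(2 * x)) - 2) / 4 := by
    have a : Real.exp (2 * x) = Real.exp x ^ 2 := by rw [← Real.exp_nat_mul]; norm_num
    have b : Real.exp (-(2 * x)) = Real.exp (-x) ^ 2 := by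
      rw [← Real.exp_nat_mul]; congr 1; push_cast; ring
    have c : Real.exp x * Real.exp (-x) = 1 := by rw [← Real.exp_add]; simp
    rw [Real.sinh_eq, a, b]
    linear_combination (-1 / 2) * c
  rw [abs_neg] at h2
  rw [abs_mul, abs_two, mul_pow] at h1 h2
  simp [Finset.sum_range_succ, Nat.factorial] at h1 h2
  have hp : 0 ≤ |x| ^ 5 := by positivity
  rw [abs_le] at *
  rw [e]
  constructor <;> nlinarith [h1.1, h1.2, h2.1, h2.2]

lemma core : Tendsto (fun x : ℝ => ((∫ η in Set.Ioi (0:ℝ), Real.log (1 + Real.sinh x ^ 2 * pp η))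
      - x ^ 2 * ∫ η in Set.Ioi (0:ℝ), pp η) / x ^ 4) (𝓝[≠] 0)
    (𝓝 ((∫ η in Set.Ioi (0:ℝ), pp η) / 3 - (∫ η in Set.Ioi (0:ℝ), pp η ^ 2) / 2)) := by
  set A := ∫ η in Set.Ioi (0:ℝ), pp η with hA
  set B := ∫ η in Set.Ioi (0:ℝ), pp η ^ 2 with hB
  have hne : ∀ᶠ x : ℝ in 𝓝[≠] 0, x ≠ 0 := self_mem_nhdsWithin
  have hsm : ∀ᶠ x : ℝ in 𝓝[≠] 0, |x| ≤ 1 / 2 := by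
    refine nhdsWithin_le_nhds ?_
    have : Tendsto (fun x : ℝ => |x|) (𝓝 0) (𝓝 0) := by simpa using (continuous_abs (G := ℝ)).tendsto 0
    exact this.eventually (eventually_le_nhds (by norm_num))
  have hid : Tendsto (fun x : ℝ => |x|) (𝓝[≠] 0) (𝓝 0) := by
    have : Tendsto (fun x : ℝ => |x|) (𝓝 0) (𝓝 0) := by simpa using (continuous_abs (G := ℝ)).tendsto 0
    exact this.mono_left nhdsWithin_le_nhds
  -- sinh^2 expansions
  have T1 : Tendsto (fun x : ℝ => (Real.sinh x ^ 2 - x ^ 2) / x ^ 4) (𝓝[≠] 0) (𝓝 (1 / 3)) := by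
    rw [tendsto_iff_norm_sub_tendsto_zero]
    refine squeeze_zero' (Eventually.of_forall fun x => norm_nonneg _) ?_
      (by simpa using hid.const_mul 32)
    filter_upwards [hne, hsm] with x h0 h1
    have h := sinh_sq_bound x h1
    have hx : 0 < |x| := abs_pos.2 h0
    have e : (Real.sinh x ^ 2 - x ^ 2) / x ^ 4 - 1 / 3
        = (Real.sinh x ^ 2 - x ^ 2 - x ^ 4 / 3) / x ^ 4 := by field_simp
    rw [e, Real.norm_eq_abs, abs_div, abs_pow, div_le_iff₀ (by positivity)]
    calc _ ≤ _ := h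
      _ = _ := by ring
  have hx2 : Tendsto (fun x : ℝ => x ^ 2) (𝓝[≠] 0) (𝓝 0) := by
    have : Tendsto (fun x : ℝ => x ^ 2) (𝓝 0) (𝓝 (0 ^ 2)) := (continuous_pow 2).tendsto 0
    simpa using this.mono_left nhdsWithin_le_nhds
  have T2 : Tendsto (fun x : ℝ => Real.sinh x ^ 2 / x ^ 2) (𝓝[≠] 0) (𝓝 1) := by
    have h := (T1.mul hx2).add_const 1
    rw [mul_zero, zero_add] at h
    refine h.congr' ?_
    filter_upwards [hne] with x h0
    field_simp
    ring
  have T3 : Tendsto (fun x : ℝ => Real.sinh x ^ 2) (𝓝[≠] 0) (𝓝 0) := by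
    have : Tendsto (fun x : ℝ => Real.sinh x ^ 2) (𝓝 0) (𝓝 (Real.sinh 0 ^ 2)) :=
      (Real.continuous_sinh.pow 2).tendsto 0
    simpa using this.mono_left nhdsWithin_le_nhds
  have hs : ∀ᶠ x : ℝ in 𝓝[≠] 0, Real.sinh x ^ 2 ≤ 1 / 2 :=
    T3.eventually (eventually_le_nhds (by norm_num))
  have T4 : Tendsto (fun x : ℝ => ((∫ η in Set.Ioi (0:ℝ), Real.log (1 + Real.sinh x ^ 2 * pp η))
      - (Real.sinh x ^ 2 * A - (Real.sinh x ^ 2) ^ 2 / 2 * B)) / x ^ 4) (𝓝[≠] 0) (𝓝 0) := by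
    rw [tendsto_zero_iff_norm_tendsto_zero]
    have hz : Tendsto (fun x : ℝ => 2 * A * ((Real.sinh x ^ 2 / x ^ 2) ^ 2 * Real.sinh x ^ 2))
        (𝓝[≠] 0) (𝓝 0) := by
      simpa using ((T2.pow 2).mul T3).const_mul (2 * A)
    refine squeeze_zero' (Eventually.of_forall fun x => norm_nonneg _) ?_ hz
    filter_upwards [hne, hs] with x h0 h1
    have h := int_bound (Real.sinh x ^ 2) (sq_nonneg _) h1
    have h4 : 0 < x ^ 4 := by positivity
    rw [Real.norm_eq_abs, abs_div, abs_of_pos h4, div_le_iff₀ h4]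
    calc _ ≤ _ := h
      _ = _ := by rw [← hA]; field_simp
  have h := (T4.add (T1.mul_const A)).sub ((T2.pow 2).mul_const (B / 2))
  have e : (0 + 1 / 3 * A - 1 ^ 2 * (B / 2)) = A / 3 - B / 2 := by ring
  rw [e] at h
  refine h.congr' ?_
  filter_upwards [hne] with x h0
  field_simp
  ring

theorem quenched_fourth_cumulant (ρ σ : ℝ) (hρ : 0 < ρ) (hσ : 0 < σ) :
    Tendsto (fun l : ℝ =>
        (mq ρ σ l - σ * l ^ 2 / (2 * ρ * Real.sqrt (2 * π))) / l ^ 4)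
      (𝓝[≠] 0)
      (nhds ((σ / (48 * ρ ^ 3)) *
        ∫ η in Set.Ioi (0 : ℝ),
          (1 - (3 / 2) * erfc η * erfc (-η)) * (erfc η * erfc (-η)))) := by
  have hl : Tendsto (fun l : ℝ => l / (2 * ρ)) (𝓝[≠] 0) (𝓝[≠] 0) := by
    refine tendsto_nhdsWithin_of_tendsto_nhds_of_eventually_within _ ?_ ?_
    · have : Tendsto (fun l : ℝ => l / (2 * ρ)) (𝓝 0) (𝓝 (0 / (2 * ρ))) :=
        (continuous_id.div_const _).tendsto 0
      simpa using this.mono_left nhdsWithin_le_nhds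
    · filter_upwards [self_mem_nhdsWithin] with l h0
      have h0' : l ≠ 0 := h0
      have : l / (2 * ρ) ≠ 0 := by positivity
      exact this
  have h := (core.comp hl).const_mul (σ / (16 * ρ ^ 3))
  have e : σ / (16 * ρ ^ 3) * ((∫ η in Set.Ioi (0:ℝ), pp η) / 3
      - (∫ η in Set.Ioi (0:ℝ), pp η ^ 2) / 2) = (σ / (48 * ρ ^ 3)) *
        ∫ η in Set.Ioi (0 : ℝ),
          (1 - (3 / 2) * erfc η * erfc (-η)) * (erfc η * erfc (-η)) := by
    have : ∀ η, (1 - (3 / 2) * erfc η * erfc (-η)) * (erfc η * erfc (-η))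
        = pp η - 3 / 2 * pp η ^ 2 := by
      intro η; unfold pp; ring
    simp_rw [this]
    rw [integral_sub pp_int (pp2_int.const_mul _), integral_const_mul]
    ring
  rw [e] at h
  refine h.congr' ?_
  filter_upwards [self_mem_nhdsWithin] with l h0
  have h0' : l ≠ 0 := h0
  have e2 : mq ρ σ l = ρ * σ * ∫ η in Set.Ioi (0:ℝ), Real.log (1 + Real.sinh (l / (2 * ρ)) ^ 2 * pp η) := by
    unfold mq pp
    simp only [mul_assoc]
  have e3 : σ * l ^ 2 / (2 * ρ * √(2 * π)) = ρ * σ * ((l / (2 * ρ)) ^ 2 * (√2 / √π)) := by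
    rw [Real.sqrt_mul (by norm_num)]
    have h2 : √2 ^ 2 = 2 := Real.sq_sqrt (by norm_num)
    have : √π ≠ 0 := by positivity
    field_simp
    rw [h2]
  simp only [Function.comp]
  rw [e2, e3, pp_integral, ← mul_sub]
  field_simp
  norm_num
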